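/- Suppose X ∈ ℝ^{n₁×n₂} has rank r, y = 𝒜(X) + w with ‖𝒜*(w)‖₂ ≤ λ, and ρ_{8r}^min(𝒜) > 0. Then any solution X̂ of the matrix Dantzig selector min_Z ‖Z‖_* subject to ‖𝒜*(y − 𝒜(Z))‖₂ ≤ λ satisfies ‖X̂ − X‖_F ≤ (4√2 / (ρ_{8r}^min(𝒜))²) · √r · λ. -/

import Mathlib

open scoped BigOperators

noncomputable section

/-- Frobenius norm of a real matrix. -/
def frobNorm {n₁ n₂ : ℕ} (X : Matrix (Fin n₁) (Fin n₂) ℝ) : ℝ :=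
  Real.sqrt (∑ i, ∑ j, (X i j) ^ 2)

/-- Singular values of a real matrix: square roots of eigenvalues of `X * Xᴴ`. -/
def singVals {n₁ n₂ : ℕ} (X : Matrix (Fin n₁) (Fin n₂) ℝ) : Fin n₁ → ℝ :=
  fun i => Real.sqrt ((Matrix.isHermitian_mul_conjTranspose_self X).eigenvalues i)

/-- Nuclear norm: sum of singular values. -/
def nuclearNorm {n₁ n₂ : ℕ} (X : Matrix (Fin n₁) (Fin n₂) ℝ) : ℝ :=
  ∑ i, singVals X i

/-- Operator norm: largest singular value. -/
def matOpNorm {n₁ n₂ : ℕ} (X : Matrix (Fin n₁) (Fin n₂) ℝ) : ℝ :=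
  ⨆ i, singVals X i

/-- ℓ*-rank. -/
def lstarRank {n₁ n₂ : ℕ} (X : Matrix (Fin n₁) (Fin n₂) ℝ) : ℝ :=
  nuclearNorm X ^ 2 / frobNorm X ^ 2

/-- Euclidean norm of a vector. -/
def vnorm {m : ℕ} (v : Fin m → ℝ) : ℝ :=
  Real.sqrt (∑ k, (v k) ^ 2)

/-- Matrix inner product. -/
def matInner {n₁ n₂ : ℕ} (X Y : Matrix (Fin n₁) (Fin n₂) ℝ) : ℝ :=
  (X.transpose * Y).trace

def cmsvMin {n₁ n₂ m : ℕ} (A : Matrix (Fin n₁) (Fin n₂) ℝ → (Fin m → ℝ)) (τ : ℝ) : ℝ :=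
  sInf {c | ∃ X : Matrix (Fin n₁) (Fin n₂) ℝ, X ≠ 0 ∧ lstarRank X ≤ τ ∧ c = vnorm (A X) / frobNorm X}

def cmsvMax {n₁ n₂ m : ℕ} (A : Matrix (Fin n₁) (Fin n₂) ℝ → (Fin m → ℝ)) (τ : ℝ) : ℝ :=
  sSup {c | ∃ X : Matrix (Fin n₁) (Fin n₂) ℝ, X ≠ 0 ∧ lstarRank X ≤ τ ∧ c = vnorm (A X) / frobNorm X}

def rcsvMin {n₁ n₂ m : ℕ} (A : Matrix (Fin n₁) (Fin n₂) ℝ → (Fin m → ℝ)) (r : ℕ) : ℝ :=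
  sInf {c | ∃ X : Matrix (Fin n₁) (Fin n₂) ℝ, X ≠ 0 ∧ X.rank ≤ r ∧ c = vnorm (A X) / frobNorm X}

def rcsvMax {n₁ n₂ m : ℕ} (A : Matrix (Fin n₁) (Fin n₂) ℝ → (Fin m → ℝ)) (r : ℕ) : ℝ :=
  sSup {c | ∃ X : Matrix (Fin n₁) (Fin n₂) ℝ, X ≠ 0 ∧ X.rank ≤ r ∧ c = vnorm (A X) / frobNorm X}

def mRIC {n₁ n₂ m : ℕ} (A : Matrix (Fin n₁) (Fin n₂) ℝ → (Fin m → ℝ)) (r : ℕ) : ℝ :=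
  sInf {δ : ℝ | 0 < δ ∧ ∀ X : Matrix (Fin n₁) (Fin n₂) ℝ, X ≠ 0 → X.rank ≤ r →
    1 - δ ≤ (vnorm (A X)) ^ 2 / (frobNorm X) ^ 2 ∧ (vnorm (A X)) ^ 2 / (frobNorm X) ^ 2 ≤ 1 + δ}

def opOf {n₁ n₂ m : ℕ} (A : Fin m → Matrix (Fin n₁) (Fin n₂) ℝ) :
    Matrix (Fin n₁) (Fin n₂) ℝ → (Fin m → ℝ) :=
  fun X k => matInner (A k) X


open Matrix

/-- `c` bounds the Euclidean operator norm of `M`, expressed through `Mᵀ`. -/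
def OpNormBound {n₁ n₂ : ℕ} (M : Matrix (Fin n₁) (Fin n₂) ℝ) (c : ℝ) : Prop :=
  ∀ u : Fin n₁ → ℝ, (Mᵀ *ᵥ u) ⬝ᵥ (Mᵀ *ᵥ u) ≤ c ^ 2 * (u ⬝ᵥ u)

lemma matInner_eq_sum {n₁ n₂ : ℕ} (X Y : Matrix (Fin n₁) (Fin n₂) ℝ) :
    matInner X Y = ∑ i, ∑ j, X i j * Y i j := by
  simp only [matInner, Matrix.trace, Matrix.diag, Matrix.mul_apply, Matrix.transpose_apply]
  exact Finset.sum_comm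

lemma matInner_self_nonneg {n₁ n₂ : ℕ} (X : Matrix (Fin n₁) (Fin n₂) ℝ) :
    0 ≤ matInner X X := by
  rw [matInner_eq_sum]
  exact Finset.sum_nonneg fun i _ => Finset.sum_nonneg fun j _ => mul_self_nonneg _

lemma frobNorm_eq_sqrt_matInner {n₁ n₂ : ℕ} (X : Matrix (Fin n₁) (Fin n₂) ℝ) :
    frobNorm X = Real.sqrt (matInner X X) := by
  simp only [frobNorm, matInner_eq_sum, pow_two]

lemma frobNorm_sq {n₁ n₂ : ℕ} (X : Matrix (Fin n₁) (Fin n₂) ℝ) :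
    frobNorm X ^ 2 = matInner X X := by
  rw [frobNorm_eq_sqrt_matInner, Real.sq_sqrt (matInner_self_nonneg X)]

lemma frobNorm_nonneg {n₁ n₂ : ℕ} (X : Matrix (Fin n₁) (Fin n₂) ℝ) : 0 ≤ frobNorm X :=
  Real.sqrt_nonneg _

lemma matInner_le_frobNorm_mul {n₁ n₂ : ℕ} (X Y : Matrix (Fin n₁) (Fin n₂) ℝ) :
    matInner X Y ≤ frobNorm X * frobNorm Y := by
  rw [matInner_eq_sum]
  simp only [frobNorm, ← Fintype.sum_prod_type']
  exact Real.sum_mul_le_sqrt_mul_sqrt _ _ _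

lemma matInner_transpose {n₁ n₂ : ℕ} (X Y : Matrix (Fin n₁) (Fin n₂) ℝ) :
    matInner Xᵀ Yᵀ = matInner X Y := by
  simp only [matInner_eq_sum, Matrix.transpose_apply]
  exact Finset.sum_comm

lemma frobNorm_transpose {n₁ n₂ : ℕ} (X : Matrix (Fin n₁) (Fin n₂) ℝ) :
    frobNorm Xᵀ = frobNorm X := by
  rw [frobNorm_eq_sqrt_matInner, matInner_transpose, ← frobNorm_eq_sqrt_matInner]

lemma matInner_add_left {n₁ n₂ : ℕ} (X Y Z : Matrix (Fin n₁) (Fin n₂) ℝ) :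
    matInner (X + Y) Z = matInner X Z + matInner Y Z := by
  simp [matInner, Matrix.add_mul]

lemma matInner_add_right {n₁ n₂ : ℕ} (X Y Z : Matrix (Fin n₁) (Fin n₂) ℝ) :
    matInner X (Y + Z) = matInner X Y + matInner X Z := by
  simp [matInner, Matrix.mul_add]

lemma matInner_neg_left {n₁ n₂ : ℕ} (X Y : Matrix (Fin n₁) (Fin n₂) ℝ) :
    matInner (-X) Y = -matInner X Y := by
  simp [matInner]

lemma matInner_neg_right {n₁ n₂ : ℕ} (X Y : Matrix (Fin n₁) (Fin n₂) ℝ) :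
    matInner X (-Y) = -matInner X Y := by
  simp [matInner]

lemma matInner_mul_left {n₁ n₂ k : ℕ} (A : Matrix (Fin n₁) (Fin k) ℝ)
    (X : Matrix (Fin k) (Fin n₂) ℝ) (Y : Matrix (Fin n₁) (Fin n₂) ℝ) :
    matInner (A * X) Y = matInner X (Aᵀ * Y) := by
  simp [matInner, Matrix.transpose_mul, Matrix.mul_assoc]

lemma matInner_mul_right {n₁ n₂ k : ℕ} (A : Matrix (Fin k) (Fin n₂) ℝ)
    (X : Matrix (Fin n₁) (Fin k) ℝ) (Y : Matrix (Fin n₁) (Fin n₂) ℝ) :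
    matInner (X * A) Y = matInner X (Y * Aᵀ) := by
  rw [matInner, matInner, Matrix.transpose_mul, Matrix.mul_assoc, Matrix.trace_mul_comm,
    Matrix.mul_assoc]

/-- Pythagoras for the range projection of a partial isometry `W`. -/
lemma frobNorm_sq_partialIsometry_split {n₁ n₂ k : ℕ} {W : Matrix (Fin n₁) (Fin n₂) ℝ}
    (hW : W * Wᵀ * W = W) (M : Matrix (Fin n₁) (Fin k) ℝ) :
    frobNorm (Wᵀ * M) ^ 2 + frobNorm ((1 - W * Wᵀ) * M) ^ 2 = frobNorm M ^ 2 := by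
  have hP : (1 - W * Wᵀ) * (1 - W * Wᵀ) = 1 - W * Wᵀ := by
    have : W * Wᵀ * (W * Wᵀ) = W * Wᵀ := by rw [← Matrix.mul_assoc, hW]
    rw [Matrix.sub_mul, Matrix.mul_sub, Matrix.mul_sub, this]; simp
  have hPt : (1 - W * Wᵀ)ᵀ = 1 - W * Wᵀ := by simp
  rw [frobNorm_sq, frobNorm_sq, frobNorm_sq, matInner_mul_left, matInner_mul_left, hPt,
    ← Matrix.mul_assoc, ← Matrix.mul_assoc, hP, ← matInner_add_right, ← Matrix.add_mul]
  simp

lemma frobNorm_transpose_mul_le {n₁ n₂ k : ℕ} {W : Matrix (Fin n₁) (Fin n₂) ℝ}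
    (hW : W * Wᵀ * W = W) (M : Matrix (Fin n₁) (Fin k) ℝ) :
    frobNorm (Wᵀ * M) ≤ frobNorm M := by
  have h := frobNorm_sq_partialIsometry_split hW M
  exact abs_le_of_sq_le_sq' (by nlinarith [sq_nonneg (frobNorm ((1 - W * Wᵀ) * M))])
    (frobNorm_nonneg _) |>.2

lemma opNormBound_of_partialIsometry {n₁ n₂ : ℕ} {W : Matrix (Fin n₁) (Fin n₂) ℝ}
    (hW : W * Wᵀ * W = W) : OpNormBound W 1 := by
  intro u
  have h := pow_le_pow_left₀ (frobNorm_nonneg _)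
    (frobNorm_transpose_mul_le hW (Matrix.of fun i (_ : Fin 1) => u i)) 2
  rw [frobNorm_sq, frobNorm_sq, matInner_eq_sum, matInner_eq_sum] at h
  simpa [Matrix.mulVec, dotProduct, Matrix.mul_apply] using h

lemma OpNormBound.neg {n₁ n₂ : ℕ} {M : Matrix (Fin n₁) (Fin n₂) ℝ} {c : ℝ}
    (h : OpNormBound M c) : OpNormBound (-M) c := by
  intro u
  simpa [Matrix.neg_mulVec] using h u

lemma singVals_nonneg {n₁ n₂ : ℕ} (X : Matrix (Fin n₁) (Fin n₂) ℝ) (i : Fin n₁) :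
    0 ≤ singVals X i := Real.sqrt_nonneg _

lemma singVals_sq {n₁ n₂ : ℕ} (X : Matrix (Fin n₁) (Fin n₂) ℝ) (i : Fin n₁) :
    singVals X i ^ 2 = (Matrix.isHermitian_mul_conjTranspose_self X).eigenvalues i :=
  Real.sq_sqrt ((Matrix.posSemidef_self_mul_conjTranspose X).eigenvalues_nonneg i)

lemma exists_orthogonal_diagonalization {n₁ n₂ : ℕ} (X : Matrix (Fin n₁) (Fin n₂) ℝ) :
    ∃ U : Matrix (Fin n₁) (Fin n₁) ℝ, Uᵀ * U = 1 ∧ U * Uᵀ = 1 ∧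
      X * Xᵀ = U * diagonal (fun i => singVals X i ^ 2) * Uᵀ := by
  have hX := Matrix.isHermitian_mul_conjTranspose_self X
  refine ⟨hX.eigenvectorUnitary, ?_, ?_, ?_⟩
  · simpa [Matrix.star_eq_conjTranspose] using Unitary.coe_star_mul_self hX.eigenvectorUnitary
  · simpa [Matrix.star_eq_conjTranspose] using Unitary.coe_mul_star_self hX.eigenvectorUnitary
  · have h := hX.spectral_theorem
    rw [Unitary.conjStarAlgAut_apply] at h
    have e : (fun i => singVals X i ^ 2) = hX.eigenvalues := funext (singVals_sq X)
    rw [e]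
    simpa [Matrix.star_eq_conjTranspose] using h

lemma card_singVals_ne_zero {n₁ n₂ : ℕ} (X : Matrix (Fin n₁) (Fin n₂) ℝ) :
    (∑ i, singVals X i * (singVals X i)⁻¹) = X.rank := by
  have h := (Matrix.isHermitian_mul_conjTranspose_self X).rank_eq_card_non_zero_eigs
  rw [Matrix.rank_self_mul_conjTranspose] at h
  rw [h, Fintype.card_subtype, Finset.card_filter]
  push_cast
  refine Finset.sum_congr rfl fun i _ => ?_
  rw [← singVals_sq]
  by_cases hi : singVals X i = 0 <;> simp [hi]

lemma dotProduct_mulVec_le {n₁ n₂ : ℕ} {M : Matrix (Fin n₁) (Fin n₂) ℝ} {c : ℝ} (hc : 0 ≤ c)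
    (hM : OpNormBound M c) {W : Matrix (Fin n₁) (Fin n₂) ℝ} (hW : OpNormBound W 1)
    {u : Fin n₁ → ℝ} (hu : u ⬝ᵥ u = 1) : (Mᵀ *ᵥ u) ⬝ᵥ (Wᵀ *ᵥ u) ≤ c := by
  have h₁ := hM u
  have h₂ := hW u
  rw [hu] at h₁ h₂
  have h := Finset.sum_mul_sq_le_sq_mul_sq Finset.univ (Mᵀ *ᵥ u) (Wᵀ *ᵥ u)
  simp only [dotProduct, ← pow_two, one_pow, mul_one] at h₁ h₂ ⊢
  refine (abs_le_of_sq_le_sq' (h.trans ?_) hc).2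
  calc _ ≤ c ^ 2 * 1 := mul_le_mul h₁ h₂ (Finset.sum_nonneg fun _ _ => sq_nonneg _) (sq_nonneg c)
    _ = c ^ 2 := mul_one _

/-- The polar factor of `X`, together with trace duality for the nuclear norm. -/
lemma exists_polar {n₁ n₂ : ℕ} (X : Matrix (Fin n₁) (Fin n₂) ℝ) :
    ∃ W : Matrix (Fin n₁) (Fin n₂) ℝ, W * Wᵀ * W = W ∧ matInner X W = nuclearNorm X ∧
      W * Wᵀ * X = X ∧ (∃ G : Matrix (Fin n₁) (Fin n₁) ℝ, W = G * X) ∧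
      (∃ G : Matrix (Fin n₂) (Fin n₂) ℝ, W = X * G) ∧
      matInner W W = X.rank ∧
      ∀ M c, 0 ≤ c → OpNormBound M c → matInner X M ≤ nuclearNorm X * c := by
  obtain ⟨U, hU, hU', hS⟩ := exists_orthogonal_diagonalization X
  set s := singVals X with hs
  set D : (Fin n₁ → ℝ) → Matrix (Fin n₁) (Fin n₁) ℝ := fun a => U * diagonal a * Uᵀ with hD
  have hmul : ∀ a b, D a * D b = D (fun i => a i * b i) := by
    intro a b
    calc D a * D b = U * diagonal a * (Uᵀ * U) * diagonal b * Uᵀ := by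
          simp only [hD, Matrix.mul_assoc]
      _ = _ := by rw [hU, Matrix.mul_one, Matrix.mul_assoc U, Matrix.diagonal_mul_diagonal]
  have htr : ∀ a, (D a)ᵀ = D a := by
    intro a; simp [hD, Matrix.transpose_mul, Matrix.mul_assoc]
  have htrace : ∀ a, (D a).trace = ∑ i, a i := by
    intro a
    simp only [hD]
    rw [Matrix.trace_mul_comm, ← Matrix.mul_assoc, hU, Matrix.one_mul, Matrix.trace_diagonal]
  have hS : X * Xᵀ = D (fun i => s i ^ 2) := hS
  set p : Fin n₁ → ℝ := fun i => s i * (s i)⁻¹ with hp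
  have hcan : ∀ x : ℝ, x * x⁻¹ * x = x := mul_inv_mul_cancel
  have hPX : D p * X = X := by
    have h0 : (D p * X - X) * (D p * X - X)ᵀ = 0 := by
      have : (D p * X - X) * (D p * X - X)ᵀ =
          D p * (X * Xᵀ) * D p - D p * (X * Xᵀ) - (X * Xᵀ) * D p + X * Xᵀ := by
        simp only [Matrix.transpose_sub, Matrix.transpose_mul, htr, Matrix.sub_mul, Matrix.mul_sub,
          Matrix.mul_assoc]
        abel
      have e₁ : D p * (X * Xᵀ) = X * Xᵀ := by
        rw [hS, hmul]; congr 1; funext i; simp only [hp]; rw [pow_two, ← mul_assoc, hcan]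
      have e₂ : (X * Xᵀ) * D p = X * Xᵀ := by
        rw [hS, hmul]; congr 1; funext i; simp only [hp]
        rw [mul_comm, pow_two, ← mul_assoc, hcan]
      rw [this, e₁, e₂]; simp
    have h1 := Matrix.self_mul_conjTranspose_eq_zero.1
      ((Matrix.conjTranspose_eq_transpose_of_trivial (D p * X - X)).symm ▸ h0)
    exact sub_eq_zero.1 h1
  set W := D (fun i => (s i)⁻¹) * X with hW
  have hWt : Wᵀ = Xᵀ * D (fun i => (s i)⁻¹) := by rw [hW, Matrix.transpose_mul, htr]
  have hsi : ∀ i, (s i)⁻¹ * s i ^ 2 = s i := by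
    intro i; rw [pow_two, ← mul_assoc, mul_comm (s i)⁻¹, hcan]
  have hWW : W * Wᵀ = D p := by
    calc W * Wᵀ = D (fun i => (s i)⁻¹) * (X * Xᵀ) * D (fun i => (s i)⁻¹) := by
          rw [hWt, hW]; simp only [Matrix.mul_assoc]
      _ = D p := by rw [hS, hmul, hmul]; simp only [hsi, hp]
  have hXWt : X * Wᵀ = D s := by
    rw [hWt, ← Matrix.mul_assoc, hS, hmul]; congr 1; funext i; rw [mul_comm, hsi]
  have hPW : D p * W = W := by
    rw [hW, ← Matrix.mul_assoc, hmul]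
    congr 2; funext i; simp only [hp]; simpa [mul_comm, mul_assoc, mul_left_comm] using hcan (s i)⁻¹
  have hBW : D s * W = X := by rw [hW, ← Matrix.mul_assoc, hmul]; exact hPX
  have hWc : OpNormBound W 1 := opNormBound_of_partialIsometry (by rw [hWW, hPW])
  refine ⟨W, by rw [hWW, hPW], ?_, by rw [hWW, hPX], ⟨_, hW⟩, ?_, ?_, ?_⟩
  · rw [← matInner_transpose, matInner, Matrix.transpose_transpose, hXWt, htrace]; rfl
  · refine ⟨Wᵀ * (D (fun i => (s i)⁻¹) * W), ?_⟩
    rw [← Matrix.mul_assoc, hXWt, ← Matrix.mul_assoc, hmul]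
    exact hPW.symm
  · rw [← matInner_transpose, matInner, Matrix.transpose_transpose, hWW, htrace]
    exact card_singVals_ne_zero X
  · intro M c hc hM
    have h1 : matInner X M = ∑ i, s i * ((Mᵀ *ᵥ (Uᵀ i)) ⬝ᵥ (Wᵀ *ᵥ (Uᵀ i))) := by
      have : matInner X M = (diagonal s * ((Wᵀ * U)ᵀ * (Mᵀ * U))).trace := by
        rw [← hBW, ← matInner_transpose, matInner, Matrix.transpose_transpose]
        simp only [hD, Matrix.transpose_mul, Matrix.transpose_transpose, Matrix.mul_assoc]
        rw [Matrix.trace_mul_comm]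
        simp only [Matrix.mul_assoc]
      rw [this, Matrix.trace]
      refine Finset.sum_congr rfl fun i _ => ?_
      rw [Matrix.diag_apply, Matrix.diagonal_mul, Matrix.mul_apply']
      congr 1
      rw [dotProduct_comm]
      rfl
    rw [h1, nuclearNorm, Finset.sum_mul]
    refine Finset.sum_le_sum fun i _ => mul_le_mul_of_nonneg_left ?_ (singVals_nonneg X i)
    refine dotProduct_mulVec_le hc hM hWc ?_
    have := congrFun (congrFun hU i) i
    simpa [Matrix.mul_apply, dotProduct] using this

lemma matInner_le_nuclearNorm_mul {n₁ n₂ : ℕ} {M : Matrix (Fin n₁) (Fin n₂) ℝ} {c : ℝ}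
    (hc : 0 ≤ c) (hM : OpNormBound M c) (X : Matrix (Fin n₁) (Fin n₂) ℝ) :
    matInner X M ≤ nuclearNorm X * c := by
  obtain ⟨W, -, -, -, -, -, -, h⟩ := exists_polar X
  exact h M c hc hM

lemma nuclearNorm_nonneg {n₁ n₂ : ℕ} (X : Matrix (Fin n₁) (Fin n₂) ℝ) : 0 ≤ nuclearNorm X :=
  Finset.sum_nonneg fun i _ => singVals_nonneg X i

lemma matOpNorm_nonneg {n₁ n₂ : ℕ} (X : Matrix (Fin n₁) (Fin n₂) ℝ) : 0 ≤ matOpNorm X :=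
  Real.iSup_nonneg fun i => singVals_nonneg X i

lemma opNormBound_of_matOpNorm_le {n₁ n₂ : ℕ} {M : Matrix (Fin n₁) (Fin n₂) ℝ} {c : ℝ}
    (h : matOpNorm M ≤ c) : OpNormBound M c := by
  obtain ⟨U, hU, hU', hS⟩ := exists_orthogonal_diagonalization M
  intro u
  have hle : ∀ i, singVals M i ≤ c := fun i =>
    (le_ciSup (Set.finite_range (singVals M)).bddAbove i).trans h
  have e₁ : (Mᵀ *ᵥ u) ⬝ᵥ (Mᵀ *ᵥ u) = ∑ i, singVals M i ^ 2 * (Uᵀ *ᵥ u) i ^ 2 := by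
    have : (Mᵀ *ᵥ u) ⬝ᵥ (Mᵀ *ᵥ u) = u ⬝ᵥ ((M * Mᵀ) *ᵥ u) := by
      rw [← Matrix.mulVec_mulVec, Matrix.dotProduct_mulVec u, ← Matrix.mulVec_transpose]
    rw [this, hS, ← Matrix.mulVec_mulVec, ← Matrix.mulVec_mulVec, Matrix.dotProduct_mulVec u,
      ← Matrix.mulVec_transpose]
    simp only [dotProduct, Matrix.mulVec_diagonal]
    exact Finset.sum_congr rfl fun i _ => by ring
  have e₂ : u ⬝ᵥ u = ∑ i, (Uᵀ *ᵥ u) i ^ 2 := by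
    have : (Uᵀ *ᵥ u) ⬝ᵥ (Uᵀ *ᵥ u) = u ⬝ᵥ u := by
      rw [Matrix.dotProduct_mulVec, ← Matrix.mulVec_transpose, Matrix.transpose_transpose,
        Matrix.mulVec_mulVec, hU', Matrix.one_mulVec]
    rw [← this]
    simp only [dotProduct, pow_two]
  rw [e₁, e₂, Finset.mul_sum]
  exact Finset.sum_le_sum fun i _ => mul_le_mul_of_nonneg_right
    (pow_le_pow_left₀ (singVals_nonneg M i) (hle i) 2) (sq_nonneg _)

/-- A perturbation that does not increase the nuclear norm of a rank-`r` matrix has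
`ℓ*`-rank at most `8r`. -/
lemma nuclearNorm_sq_le_of_nuclearNorm_add_le {n₁ n₂ : ℕ} (X H : Matrix (Fin n₁) (Fin n₂) ℝ)
    (h : nuclearNorm (X + H) ≤ nuclearNorm X) :
    nuclearNorm H ^ 2 ≤ 8 * (X.rank : ℝ) * frobNorm H ^ 2 := by
  obtain ⟨W, hW, hXW, hWX, -, -, hWr, -⟩ := exists_polar X
  have hWt : Wᵀ * (W * Wᵀ) = Wᵀ := by
    simpa [Matrix.transpose_mul, Matrix.mul_assoc] using congrArg Matrix.transpose hW
  set Hc := (1 - W * Wᵀ) * H * (1 - Wᵀ * W) with hHc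
  obtain ⟨V, hV, hHV, -, ⟨G, hG⟩, ⟨G', hG'⟩, -, -⟩ := exists_polar Hc
  obtain ⟨T, hT, hHT, -, -, -, -, -⟩ := exists_polar H
  have hWHc : Wᵀ * Hc = 0 := by
    rw [hHc, ← Matrix.mul_assoc, ← Matrix.mul_assoc, Matrix.mul_sub Wᵀ, hWt]; simp
  have hHcW : Hc * Wᵀ = 0 := by
    rw [hHc, Matrix.mul_assoc, Matrix.sub_mul 1 (Wᵀ * W), Matrix.mul_assoc Wᵀ, hWt]; simp
  have hWV : Wᵀ * V = 0 := by rw [hG', ← Matrix.mul_assoc, hWHc, Matrix.zero_mul]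
  have hVW : V * Wᵀ = 0 := by rw [hG, Matrix.mul_assoc, hHcW, Matrix.mul_zero]
  have hWVt : W * Vᵀ = 0 := by simpa using congrArg Matrix.transpose hVW
  have hsum : (W + V) * (W + V)ᵀ * (W + V) = W + V := by
    have : (W + V) * (W + V)ᵀ = W * Wᵀ + V * Vᵀ := by
      rw [Matrix.transpose_add, Matrix.mul_add, Matrix.add_mul, Matrix.add_mul, hWVt, hVW]; simp
    have hVtW : Vᵀ * W = 0 := by simpa using congrArg Matrix.transpose hWV
    rw [this, Matrix.mul_add, Matrix.add_mul, Matrix.add_mul, hW, hV, Matrix.mul_assoc V, hVtW,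
      Matrix.mul_assoc W, hWV]
    simp
  have hlow := matInner_le_nuclearNorm_mul zero_le_one (opNormBound_of_partialIsometry hsum) (X + H)
  have hXV : matInner X V = 0 := by
    rw [← hWX, Matrix.mul_assoc, matInner_mul_left, hWV]; simp [matInner]
  have hHV' : matInner H V = nuclearNorm Hc := by
    rw [← hHV, hHc, matInner_mul_right, matInner_mul_left]
    congr 1
    simp [Matrix.mul_sub, Matrix.sub_mul, Matrix.mul_assoc, hWV, ← Matrix.mul_assoc V, hVW]
  have hfW : frobNorm W = Real.sqrt X.rank := by rw [frobNorm_eq_sqrt_matInner, hWr]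
  have hHW : -matInner H W ≤ frobNorm H * Real.sqrt X.rank := by
    have := matInner_le_frobNorm_mul (-H) W
    rwa [matInner_neg_left, hfW, frobNorm_eq_sqrt_matInner (-H), matInner_neg_left,
      matInner_neg_right, neg_neg, ← frobNorm_eq_sqrt_matInner] at this
  rw [matInner_add_left, matInner_add_right, matInner_add_right, hXW, hXV, hHV'] at hlow
  have hTt : Tᵀ * Tᵀᵀ * Tᵀ = Tᵀ := by
    simpa [Matrix.transpose_mul, Matrix.mul_assoc] using congrArg Matrix.transpose hT
  have hWt' : Wᵀ * Wᵀᵀ * Wᵀ = Wᵀ := by simpa [Matrix.mul_assoc] using hWt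
  have hHcT : matInner Hc T ≤ nuclearNorm Hc := by
    simpa using matInner_le_nuclearNorm_mul zero_le_one (opNormBound_of_partialIsometry hT) Hc
  have hdec : matInner H T = matInner (Wᵀ * H) (Wᵀ * T) +
      matInner ((1 - W * Wᵀ) * H * Wᵀ) (T * Wᵀ) + matInner Hc T := by
    have e : H = W * (Wᵀ * H) + (1 - W * Wᵀ) * H * Wᵀ * W + Hc := by
      rw [hHc, Matrix.mul_sub, Matrix.mul_one, Matrix.mul_assoc _ Wᵀ W, add_add_sub_cancel,
        Matrix.sub_mul, Matrix.one_mul, Matrix.mul_assoc W]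
      abel
    conv_lhs => rw [e]
    rw [matInner_add_left, matInner_add_left, matInner_mul_left W,
      matInner_mul_right W]
  have ha : matInner (Wᵀ * H) (Wᵀ * T) ≤ frobNorm (Wᵀ * H) * Real.sqrt X.rank := by
    refine (matInner_le_frobNorm_mul _ _).trans
      (mul_le_mul_of_nonneg_left ?_ (frobNorm_nonneg _))
    rw [← hfW, ← frobNorm_transpose (Wᵀ * T), Matrix.transpose_mul, Matrix.transpose_transpose]
    exact frobNorm_transpose_mul_le hT W
  have hb : matInner ((1 - W * Wᵀ) * H * Wᵀ) (T * Wᵀ) ≤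
      frobNorm ((1 - W * Wᵀ) * H * Wᵀ) * Real.sqrt X.rank := by
    refine (matInner_le_frobNorm_mul _ _).trans
      (mul_le_mul_of_nonneg_left ?_ (frobNorm_nonneg _))
    rw [← hfW, ← frobNorm_transpose W]
    exact frobNorm_transpose_mul_le hTt Wᵀ
  have hb' : frobNorm ((1 - W * Wᵀ) * H * Wᵀ) ≤ frobNorm ((1 - W * Wᵀ) * H) := by
    rw [← frobNorm_transpose, Matrix.transpose_mul, ← frobNorm_transpose ((1 - W * Wᵀ) * H)]
    exact frobNorm_transpose_mul_le hWt' _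
  have hpyth := frobNorm_sq_partialIsometry_split hW H
  have ha0 := frobNorm_nonneg (Wᵀ * H)
  have hb0 := frobNorm_nonneg ((1 - W * Wᵀ) * H * Wᵀ)
  have hh0 := frobNorm_nonneg H
  have hs0 := Real.sqrt_nonneg (X.rank : ℝ)
  have hs2 := Real.sq_sqrt (Nat.cast_nonneg X.rank : (0 : ℝ) ≤ X.rank)
  generalize frobNorm (Wᵀ * H) = a at *
  generalize frobNorm ((1 - W * Wᵀ) * H * Wᵀ) = b at *
  generalize frobNorm ((1 - W * Wᵀ) * H) = b' at *
  generalize Real.sqrt (X.rank : ℝ) = s at *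
  have hab : a + b ≤ 3 / 2 * frobNorm H :=
    (abs_le_of_sq_le_sq' (by nlinarith [sq_nonneg (a - b)]) (by positivity)).2
  have hN : nuclearNorm H ≤ 5 / 2 * (s * frobNorm H) := by
    nlinarith [mul_le_mul_of_nonneg_left hab hs0]
  rw [← hs2]
  have := pow_le_pow_left₀ (nuclearNorm_nonneg H) hN 2
  nlinarith [sq_nonneg (s * frobNorm H)]

lemma vnorm_sq {m : ℕ} (v : Fin m → ℝ) : vnorm v ^ 2 = ∑ k, v k * v k := by
  rw [vnorm, Real.sq_sqrt (Finset.sum_nonneg fun _ _ => sq_nonneg _)]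
  simp only [pow_two]

lemma frobNorm_pos {n₁ n₂ : ℕ} {X : Matrix (Fin n₁) (Fin n₂) ℝ} (hX : X ≠ 0) :
    0 < frobNorm X := by
  rw [frobNorm_eq_sqrt_matInner, Real.sqrt_pos]
  refine lt_of_le_of_ne (matInner_self_nonneg X) fun h => hX ?_
  rw [← Matrix.trace_conjTranspose_mul_self_eq_zero_iff,
    Matrix.conjTranspose_eq_transpose_of_trivial]
  exact h.symm

lemma cmsvMin_mul_frobNorm_le {n₁ n₂ m : ℕ} (A : Matrix (Fin n₁) (Fin n₂) ℝ → (Fin m → ℝ)) {τ : ℝ}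
    {X : Matrix (Fin n₁) (Fin n₂) ℝ} (hX : X ≠ 0) (hτ : lstarRank X ≤ τ) :
    cmsvMin A τ * frobNorm X ≤ vnorm (A X) := by
  rw [← le_div_iff₀ (frobNorm_pos hX)]
  refine csInf_le ⟨0, ?_⟩ ⟨X, hX, hτ, rfl⟩
  rintro _ ⟨Y, -, -, rfl⟩
  exact div_nonneg (Real.sqrt_nonneg _) (frobNorm_nonneg Y)

/-- stability of the matrix Dantzig selector. -/
theorem stmt7 {n₁ n₂ m : ℕ} (hn : n₁ ≤ n₂)
    (𝒜 : Matrix (Fin n₁) (Fin n₂) ℝ →ₗ[ℝ] (Fin m → ℝ))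
    (Astar : (Fin m → ℝ) →ₗ[ℝ] Matrix (Fin n₁) (Fin n₂) ℝ)
    (hadj : ∀ (X : Matrix (Fin n₁) (Fin n₂) ℝ) (z : Fin m → ℝ),
      (∑ k, 𝒜 X k * z k) = matInner X (Astar z))
    (X : Matrix (Fin n₁) (Fin n₂) ℝ) (r : ℕ) (hrank : X.rank = r)
    (w : Fin m → ℝ) (lam : ℝ) (hw : matOpNorm (Astar w) ≤ lam)
    (y : Fin m → ℝ) (hy : y = 𝒜 X + w)
    (hρ : 0 < cmsvMin (⇑𝒜) (8 * (r : ℝ)))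
    (Xhat : Matrix (Fin n₁) (Fin n₂) ℝ)
    (hfeas : matOpNorm (Astar (y - 𝒜 Xhat)) ≤ lam)
    (hopt : ∀ Z : Matrix (Fin n₁) (Fin n₂) ℝ,
      matOpNorm (Astar (y - 𝒜 Z)) ≤ lam → nuclearNorm Xhat ≤ nuclearNorm Z) :
    frobNorm (Xhat - X) ≤
      4 * Real.sqrt 2 / cmsvMin (⇑𝒜) (8 * (r : ℝ)) ^ 2 * Real.sqrt r * lam := by
  have hlam : 0 ≤ lam := (matOpNorm_nonneg _).trans hw
  set ρ := cmsvMin (⇑𝒜) (8 * (r : ℝ)) with hρdef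
  set H := Xhat - X with hH
  by_cases hH0 : H = 0
  · have : frobNorm H = 0 := by rw [hH0]; simp [frobNorm]
    rw [this]
    positivity
  have hle : nuclearNorm (X + H) ≤ nuclearNorm X := by
    rw [hH, add_sub_cancel]
    exact hopt X (by rw [hy, add_sub_cancel_left]; exact hw)
  have hN := nuclearNorm_sq_le_of_nuclearNorm_add_le X H hle
  rw [hrank] at hN
  have hpos := frobNorm_pos hH0
  have hτ : lstarRank H ≤ 8 * (r : ℝ) := (div_le_iff₀ (by positivity)).2 hN
  have hlow := cmsvMin_mul_frobNorm_le (⇑𝒜) hH0 hτ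
  rw [← hρdef] at hlow
  have hAH : 𝒜 H = w + -(y - 𝒜 Xhat) := by
    rw [hy, hH, map_sub]; abel
  have hup : vnorm (𝒜 H) ^ 2 ≤ nuclearNorm H * lam + nuclearNorm H * lam := by
    rw [vnorm_sq, hadj]
    conv_lhs => rw [hAH]
    rw [map_add, map_neg, matInner_add_right]
    exact add_le_add
      (matInner_le_nuclearNorm_mul hlam (opNormBound_of_matOpNorm_le hw) H)
      (matInner_le_nuclearNorm_mul hlam (opNormBound_of_matOpNorm_le hfeas).neg H)
  have hsq : (ρ * frobNorm H) ^ 2 ≤ vnorm (𝒜 H) ^ 2 := pow_le_pow_left₀ (by positivity) hlow 2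
  have hN' : nuclearNorm H ≤ 2 * Real.sqrt 2 * Real.sqrt r * frobNorm H := by
    refine (abs_le_of_sq_le_sq' (hN.trans_eq ?_) (by positivity)).2
    rw [mul_pow, mul_pow, mul_pow, Real.sq_sqrt (by norm_num), Real.sq_sqrt (Nat.cast_nonneg r)]
    ring
  have hfin : frobNorm H * ρ ^ 2 ≤ 4 * Real.sqrt 2 * Real.sqrt r * lam := by
    refine le_of_mul_le_mul_right ?_ hpos
    nlinarith [mul_le_mul_of_nonneg_right hN' hlam]
  calc frobNorm H ≤ 4 * Real.sqrt 2 * Real.sqrt r * lam / ρ ^ 2 :=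
        (le_div_iff₀ (by positivity)).2 hfin
    _ = _ := by ring

end
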